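/- Let d ≥ 2, k ≥ 2, 1 ≤ t ≤ k, let ψ ∈ ℂ^d be a unit vector with projector P = |ψ⟩⟨ψ|, let Ω = P + λ(I − P) with λ ∈ [0,1), and let σ_ε = (1−ε)P + ε(I − P)/(d−1) with ε ∈ [0,1]. With S_k the cyclic-shift unitary on (ℂ^d)^{⊗k} and D_k = (I + S_k)/2, the passing probability of the collective scheme satisfies tr[(Ω^{⊗t} ⊗ I^{⊗(k−t)}) · D_k σ_ε^{⊗k} D_k†] = (1/2)[(1 − (1−λ)ε)^t + (1−ε)^k + λ^t ε^k/(d−1)^{k−1}]. -/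

import Mathlib

open Matrix Kronecker BigOperators

noncomputable section

/-- The cyclically previous index: `m - 1 (mod k)`. -/
def prevIdx {k : ℕ} (m : Fin k) : Fin k :=
  ⟨(m.val + (k - 1)) % k, Nat.mod_lt _ m.pos⟩

/-- The cyclic-shift unitary `S_k` on `(ℂ^d)^{⊗k}`, determined by
`S_k (v_1 ⊗ ⋯ ⊗ v_k) = v_k ⊗ v_1 ⊗ ⋯ ⊗ v_{k-1}`, written as a matrix in the
standard tensor-product basis indexed by functions `Fin k → Fin d`. -/
def cyc (d k : ℕ) : Matrix (Fin k → Fin d) (Fin k → Fin d) ℂ :=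
  fun g f => if g = fun m => f (prevIdx m) then 1 else 0

/-- The SWAP projection `D_k = (I + S_k)/2`. -/
def Dk (d k : ℕ) : Matrix (Fin k → Fin d) (Fin k → Fin d) ℂ :=
  (1 / 2 : ℂ) • (1 + cyc d k)

/-- The tensor product `A_1 ⊗ A_2 ⊗ ⋯ ⊗ A_k` of `d × d` matrices, acting
factor-wise on `(ℂ^d)^{⊗k}`. -/
def tensOp {d k : ℕ} (A : Fin k → Matrix (Fin d) (Fin d) ℂ) :
    Matrix (Fin k → Fin d) (Fin k → Fin d) ℂ :=
  fun g f => ∏ m, A m (g m) (f m)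

/-- The tensor product `v_1 ⊗ ⋯ ⊗ v_k` of vectors in `ℂ^d`. -/
def tensVec {d k : ℕ} (v : Fin k → (Fin d → ℂ)) : (Fin k → Fin d) → ℂ :=
  fun f => ∏ m, v m (f m)

/-- The partial trace over the last `k - 1` tensor factors, mapping matrices on
`(ℂ^d)^{⊗k}` to `d × d` matrices by tracing out factors `2` through `k`. -/
def ptraceFirst {d k : ℕ} (M : Matrix (Fin k → Fin d) (Fin k → Fin d) ℂ) :
    Matrix (Fin d) (Fin d) ℂ :=
  fun a b => ∑ r : {i : Fin k // i.val ≠ 0} → Fin d,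
    M (fun m => if h : m.val = 0 then a else r ⟨m, h⟩)
      (fun m => if h : m.val = 0 then b else r ⟨m, h⟩)

theorem aux_prev_zero (n : ℕ) : prevIdx (0 : Fin (n+1)) = Fin.last n := by
  ext; simp [prevIdx]

theorem aux_prev_succ (n : ℕ) (m : Fin n) : prevIdx (m.succ : Fin (n+1)) = m.castSucc := by
  ext
  have := m.2
  simp only [prevIdx, Fin.val_succ, Fin.val_castSucc]
  have h : m.val + 1 + (n + 1 - 1) = m.val + (n + 1) := by omega
  rw [h, Nat.add_mod_right, Nat.mod_eq_of_lt (by omega)]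

theorem aux_prev_bij (n : ℕ) : Function.Bijective (prevIdx : Fin (n+1) → Fin (n+1)) := by
  apply Function.Surjective.bijective_of_finite
  intro m
  induction m using Fin.lastCases with
  | last => exact ⟨0, aux_prev_zero n⟩
  | cast i => exact ⟨i.succ, aux_prev_succ n i⟩

def auxE (d n : ℕ) : (Fin (n+1) → Fin d) ≃ (Fin (n+1) → Fin d) :=
  (Equiv.ofBijective _ (aux_prev_bij n)).symm.arrowCongr (Equiv.refl _)

theorem auxE_apply (d n : ℕ) (f : Fin (n+1) → Fin d) :
    auxE d n f = fun m => f (prevIdx m) := by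
  ext m
  simp [auxE, Equiv.arrowCongr]

theorem cyc_eq (d n : ℕ) : cyc d (n+1) = (1 : Matrix _ _ ℂ).submatrix id (auxE d n) := by
  ext g f
  simp [cyc, Matrix.one_apply, auxE_apply]

theorem cycH_eq (d n : ℕ) :
    (cyc d (n+1))ᴴ = (1 : Matrix _ _ ℂ).submatrix (auxE d n) id := by
  rw [cyc_eq, conjTranspose_submatrix, conjTranspose_one]

theorem cycH_eq_T (d n : ℕ) : (cyc d (n+1))ᴴ = (cyc d (n+1))ᵀ := by
  rw [cycH_eq, cyc_eq, transpose_submatrix, transpose_one]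

theorem tens_sub (d n : ℕ) (s : Matrix (Fin d) (Fin d) ℂ) :
    (tensOp (fun _ : Fin (n+1) => s)).submatrix (auxE d n) (auxE d n)
      = tensOp (fun _ : Fin (n+1) => s) := by
  ext g f
  simp only [submatrix_apply, auxE_apply, tensOp]
  exact (aux_prev_bij n).prod_comp (fun m => s (g m) (f m))

theorem cyc_comm (d n : ℕ) (s : Matrix (Fin d) (Fin d) ℂ) :
    cyc d (n+1) * tensOp (fun _ : Fin (n+1) => s)
      = tensOp (fun _ : Fin (n+1) => s) * cyc d (n+1) := by
  have h1 : cyc d (n+1) * tensOp (fun _ : Fin (n+1) => s)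
      = (tensOp (fun _ : Fin (n+1) => s)).submatrix id (auxE d n) := by
    conv_lhs => rw [← tens_sub d n s, cyc_eq, submatrix_mul_equiv, Matrix.one_mul]
  have h2 : tensOp (fun _ : Fin (n+1) => s) * cyc d (n+1)
      = (tensOp (fun _ : Fin (n+1) => s)).submatrix id (auxE d n) := by
    rw [cyc_eq]
    have := submatrix_mul_equiv (tensOp (fun _ : Fin (n+1) => s))
      (1 : Matrix (Fin (n+1) → Fin d) (Fin (n+1) → Fin d) ℂ) id (Equiv.refl _) (auxE d n)
    simpa using this
  rw [h1, h2]

theorem cyc_unit (d n : ℕ) : cyc d (n+1) * (cyc d (n+1))ᴴ = 1 := by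
  rw [cycH_eq, cyc_eq, submatrix_mul_equiv, Matrix.one_mul, submatrix_id_id]

theorem tens_mul {d k : ℕ} (A B : Fin k → Matrix (Fin d) (Fin d) ℂ) :
    tensOp A * tensOp B = tensOp (fun m => A m * B m) := by
  ext g f
  simp only [tensOp, Matrix.mul_apply, Finset.prod_univ_sum, Fintype.piFinset_univ,
    Finset.prod_mul_distrib]

theorem tens_trace {d k : ℕ} (A : Fin k → Matrix (Fin d) (Fin d) ℂ) :
    (tensOp A).trace = ∏ m, (A m).trace := by
  simp only [tensOp, Matrix.trace, Matrix.diag, Finset.prod_univ_sum, Fintype.piFinset_univ]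

theorem tens_cyc_trace {d n : ℕ} (A : Fin (n+1) → Matrix (Fin d) (Fin d) ℂ) :
    (tensOp A * cyc d (n+1)).trace
      = ∑ g : Fin (n+1) → Fin d, ∏ m, A m (g m) (g (prevIdx m)) := by
  simp [Matrix.trace, Matrix.diag, Matrix.mul_apply, cyc, tensOp]

theorem path_sum {d : ℕ} (P Q : Matrix (Fin d) (Fin d) ℂ) (hPQ : P + Q = 1)
    (hPP : P * P = P) (hQQ : Q * Q = Q) (h1 : P * Q = 0) (h2 : Q * P = 0) (n : ℕ) :
    ∀ (a b : Fin n → ℂ) (φ : Matrix (Fin d) (Fin d) ℂ),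
    ∑ g : Fin (n+1) → Fin d, φ (g 0) (g (Fin.last n)) *
        ∏ m : Fin n, (a m • P + b m • Q) (g m.succ) (g m.castSucc)
      = (φ * ((∏ m, a m) • P + (∏ m, b m) • Q)).trace := by
  induction n with
  | zero =>
    intro a b φ
    simp only [Finset.univ_eq_empty, Finset.prod_empty, one_smul, hPQ, Matrix.mul_one, mul_one]
    rw [← (Equiv.funUnique (Fin 1) (Fin d)).symm.sum_comp]
    simp [Matrix.trace]
  | succ n ih =>
    intro a b φ
    have key := ih (fun m => a m.succ) (fun m => b m.succ) ((a 0 • P + b 0 • Q) * φ)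
    have hm : ((a 0 • P + b 0 • Q) * φ * ((∏ m : Fin n, a m.succ) • P + (∏ m : Fin n, b m.succ) • Q)).trace
        = (φ * ((∏ m, a m) • P + (∏ m, b m) • Q)).trace := by
      rw [Matrix.mul_assoc, Matrix.trace_mul_comm, Matrix.mul_assoc]
      congr 2
      rw [Fin.prod_univ_succ, Fin.prod_univ_succ]
      simp only [Matrix.add_mul, Matrix.mul_add, smul_mul_smul_comm, hPP, hQQ, h1, h2, smul_zero,
        add_zero, zero_add]
      rw [mul_comm (a 0), mul_comm (b 0)]
    rw [← hm, ← key, ← (Fin.consEquiv (fun _ : Fin (n+2) => Fin d)).sum_comp,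
      Fintype.sum_prod_type, Finset.sum_comm]
    refine Finset.sum_congr rfl fun g _ => ?_
    rw [Matrix.mul_apply, Finset.sum_mul]
    refine Finset.sum_congr rfl fun x _ => ?_
    rw [Fin.prod_univ_succ]
    simp only [Fin.consEquiv_apply, Fin.cons_zero, Fin.cons_succ, ← Fin.succ_last,
      Fin.castSucc_zero, ← Fin.succ_castSucc]
    ring

theorem cyc_trace {d n : ℕ} (P Q : Matrix (Fin d) (Fin d) ℂ) (hPQ : P + Q = 1)
    (hPP : P * P = P) (hQQ : Q * Q = Q) (h1 : P * Q = 0) (h2 : Q * P = 0)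
    (a b : Fin (n+1) → ℂ) :
    (tensOp (fun m => a m • P + b m • Q) * cyc d (n+1)).trace
      = (∏ m, a m) * P.trace + (∏ m, b m) * Q.trace := by
  rw [tens_cyc_trace]
  have key := path_sum P Q hPQ hPP hQQ h1 h2 n (fun m => a m.succ) (fun m => b m.succ)
    (a 0 • P + b 0 • Q)
  simp only [Fin.prod_univ_succ, aux_prev_zero, aux_prev_succ]
  rw [key]
  simp only [Matrix.add_mul, Matrix.mul_add, smul_mul_smul_comm, hPP, hQQ, h1, h2, smul_zero,
        add_zero, zero_add, Matrix.trace_add, Matrix.trace_smul, smul_eq_mul]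

theorem tens_T {d k : ℕ} (A : Fin k → Matrix (Fin d) (Fin d) ℂ) :
    tensOp A = (tensOp (fun m => (A m)ᵀ))ᵀ := by
  ext g f; simp [tensOp]

theorem cycH_trace {d n : ℕ} (P Q : Matrix (Fin d) (Fin d) ℂ) (hPQ : P + Q = 1)
    (hPP : P * P = P) (hQQ : Q * Q = Q) (h1 : P * Q = 0) (h2 : Q * P = 0)
    (a b : Fin (n+1) → ℂ) :
    (tensOp (fun m => a m • P + b m • Q) * (cyc d (n+1))ᴴ).trace
      = (∏ m, a m) * P.trace + (∏ m, b m) * Q.trace := by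
  rw [tens_T, cycH_eq_T, ← Matrix.transpose_mul, Matrix.trace_transpose, Matrix.trace_mul_comm]
  simp only [Matrix.transpose_add, Matrix.transpose_smul]
  rw [cyc_trace, Matrix.trace_transpose, Matrix.trace_transpose]
  · rw [← Matrix.transpose_add, hPQ, Matrix.transpose_one]
  · rw [← Matrix.transpose_mul, hPP]
  · rw [← Matrix.transpose_mul, hQQ]
  · rw [← Matrix.transpose_mul, h2, Matrix.transpose_zero]
  · rw [← Matrix.transpose_mul, h1, Matrix.transpose_zero]

theorem prod_ite_lt (k t : ℕ) (ht : t ≤ k) (x : ℂ) :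
    (∏ m : Fin k, if m.val < t then x else 1) = x ^ t := by
  rw [Fin.prod_univ_eq_prod_range (fun i => if i < t then x else 1) k, Finset.prod_ite]
  simp only [Finset.prod_const, one_pow, mul_one]
  congr 1
  have : (Finset.range k).filter (fun i => i < t) = Finset.range t := by
    ext i; simp; omega
  rw [this, Finset.card_range]

/-- passing probability of the collective scheme on `k` copies of the
white-noise state `σ_ε = (1−ε)P + ε(I−P)/(d−1)` with homogeneous verification
operator `Ω = P + λ(I−P)`:
`tr[(Ω^{⊗t} ⊗ I^{⊗(k−t)}) · D_k σ_ε^{⊗k} D_k†]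
  = (1/2)[(1−(1−λ)ε)^t + (1−ε)^k + λ^t ε^k/(d−1)^{k−1}]`. -/
theorem stmt8 (d k t : ℕ) (hd : 2 ≤ d) (hk : 2 ≤ k) (ht1 : 1 ≤ t) (ht2 : t ≤ k)
    (ψ : Fin d → ℂ) (hψ : star ψ ⬝ᵥ ψ = 1)
    (lam ε : ℝ) (hlam0 : 0 ≤ lam) (hlam1 : lam < 1) (hε0 : 0 ≤ ε) (hε1 : ε ≤ 1)
    (P Ω σ : Matrix (Fin d) (Fin d) ℂ)
    (hP : P = vecMulVec ψ (star ψ))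
    (hΩ : Ω = P + (lam : ℂ) • (1 - P))
    (hσ : σ = ((1 - ε : ℝ) : ℂ) • P + ((ε / ((d : ℝ) - 1) : ℝ) : ℂ) • (1 - P)) :
    (tensOp (fun m : Fin k => if m.val < t then Ω else 1)
        * (Dk d k * tensOp (fun _ : Fin k => σ) * (Dk d k)ᴴ)).trace
      = (1 / 2 : ℂ) * (((1 - (1 - lam) * ε) ^ t + (1 - ε) ^ k
          + lam ^ t * ε ^ k / ((d : ℝ) - 1) ^ (k - 1) : ℝ) : ℂ) := by
  obtain ⟨n, rfl⟩ : ∃ n, k = n + 1 := ⟨k - 1, by omega⟩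
  have hPP : P * P = P := by
    rw [hP, vecMulVec_mul_vecMulVec, hψ]; simp
  have hPt : P.trace = 1 := by
    rw [hP, trace_vecMulVec, dotProduct_comm, hψ]
  obtain ⟨Q, hQ⟩ : ∃ Q, Q = 1 - P := ⟨_, rfl⟩
  have hPQ : P + Q = 1 := by rw [hQ]; abel
  have h1 : P * Q = 0 := by rw [hQ, Matrix.mul_sub, Matrix.mul_one, hPP, sub_self]
  have h2 : Q * P = 0 := by rw [hQ, Matrix.sub_mul, Matrix.one_mul, hPP, sub_self]
  have hQQ : Q * Q = Q := by
    nth_rewrite 1 [hQ]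
    rw [Matrix.sub_mul, Matrix.one_mul, h1, sub_zero]
  have hQt : Q.trace = (d : ℂ) - 1 := by
    rw [hQ, Matrix.trace_sub, hPt, Matrix.trace_one, Fintype.card_fin]
  rw [← hQ] at hΩ hσ
  obtain ⟨s, hs⟩ : ∃ s : ℂ, s = ((1 - ε : ℝ) : ℂ) := ⟨_, rfl⟩
  obtain ⟨r, hr⟩ : ∃ r : ℂ, r = ((ε / ((d : ℝ) - 1) : ℝ) : ℂ) := ⟨_, rfl⟩
  rw [← hs, ← hr] at hσ
  have hd0 : (d : ℂ) - 1 ≠ 0 := by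
    rw [sub_ne_zero]; norm_cast; omega
  have hrd : r * ((d : ℂ) - 1) = ε := by
    rw [hr]; push_cast; field_simp
  have hB : (fun m : Fin (n+1) => (if m.val < t then Ω else 1) * σ)
      = fun m : Fin (n+1) => s • P + ((if m.val < t then (lam : ℂ) else 1) * r) • Q := by
    funext m
    split_ifs
    · rw [hΩ, hσ]
      simp only [Matrix.add_mul, Matrix.mul_add, smul_mul_smul_comm, Matrix.mul_smul,
        Matrix.smul_mul, hPP, hQQ, h1, h2, smul_zero, add_zero, zero_add, smul_smul]
      rw [mul_comm r]
    · rw [hσ, Matrix.one_mul, one_mul]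
  have hexp : tensOp (fun m : Fin (n+1) => if m.val < t then Ω else 1)
        * (Dk d (n+1) * tensOp (fun _ : Fin (n+1) => σ) * (Dk d (n+1))ᴴ)
      = (1/4 : ℂ) • ((2 : ℂ) • tensOp (fun m : Fin (n+1) => (if m.val < t then Ω else 1) * σ)
        + tensOp (fun m : Fin (n+1) => (if m.val < t then Ω else 1) * σ) * cyc d (n+1)
        + tensOp (fun m : Fin (n+1) => (if m.val < t then Ω else 1) * σ) * (cyc d (n+1))ᴴ) := by
    rw [← tens_mul]
    have hD : Dk d (n+1) * tensOp (fun _ : Fin (n+1) => σ) * (Dk d (n+1))ᴴ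
        = (1/4 : ℂ) • (tensOp (fun _ : Fin (n+1) => σ) *
            ((2 : ℂ) • 1 + cyc d (n+1) + (cyc d (n+1))ᴴ)) := by
      have hc : (star (1/2 : ℂ)) = 1/2 := by simp
      rw [Dk, conjTranspose_smul, conjTranspose_add, conjTranspose_one, hc, Matrix.smul_mul,
        smul_mul_smul_comm, Matrix.add_mul, Matrix.one_mul, cyc_comm]
      congr 1
      · norm_num
      · have h := cyc_unit d n
        rw [Matrix.add_mul, Matrix.mul_add, Matrix.mul_one, Matrix.mul_assoc, Matrix.mul_add, h]
        simp only [Matrix.mul_add, Matrix.mul_one, two_smul]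
        abel
    rw [hD, Matrix.mul_smul, ← Matrix.mul_assoc]
    simp only [Matrix.mul_add, Matrix.mul_smul, Matrix.mul_one]
  rw [hexp, hB]
  simp only [Matrix.trace_smul, Matrix.trace_add, smul_eq_mul]
  rw [cyc_trace P Q hPQ hPP hQQ h1 h2, cycH_trace P Q hPQ hPP hQQ h1 h2, tens_trace]
  have hT : ∀ m : Fin (n+1), (s • P + ((if m.val < t then (lam : ℂ) else 1) * r) • Q).trace
      = if m.val < t then (1 - (1 - (lam : ℂ)) * ε) else 1 := by
    intro m
    rw [Matrix.trace_add, Matrix.trace_smul, Matrix.trace_smul, hPt, hQt, smul_eq_mul,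
      smul_eq_mul, mul_assoc, hrd, hs]
    push_cast
    split_ifs <;> ring
  simp only [hT]
  rw [prod_ite_lt _ _ ht2, Finset.prod_mul_distrib, prod_ite_lt _ _ ht2, hPt, hQt]
  simp only [Finset.prod_const, Finset.card_univ, Fintype.card_fin, Nat.add_sub_cancel]
  have hfin : r ^ (n+1) * ((d : ℂ) - 1) = ε ^ (n+1) / ((d : ℂ) - 1) ^ n := by
    rw [eq_div_iff (pow_ne_zero _ hd0), ← hrd, mul_pow]; ring
  rw [mul_assoc ((lam : ℂ) ^ t), hfin, hs]
  push_cast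
  ring
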